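/- FC(7, 10) ≥ 85; that is, there exists a family of 84 distinct 7-element subsets of {1,…,10} whose universe equals {1,…,10} that is Non-FC. -/

import Mathlib

/-- The universe of a family of finite sets: the union of all its members. -/
def famUniverse (A : Finset (Finset ℕ)) : Finset ℕ := A.sup id

/-- A family is union-closed if it is nonempty and closed under pairwise unions. -/
def UnionClosed (F : Finset (Finset ℕ)) : Prop :=
  F.Nonempty ∧ ∀ A ∈ F, ∀ B ∈ F, A ∪ B ∈ F

/-- A family `A` is FC (Frankl-Complete) if for every union-closed family `F`
containing `A`, some element of the universe of `A` belongs to at least half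
of the members of `F`. -/
def IsFC (A : Finset (Finset ℕ)) : Prop :=
  ∀ F : Finset (Finset ℕ), UnionClosed F → A ⊆ F →
    ∃ x ∈ famUniverse A, F.card ≤ 2 * (F.filter (fun S => x ∈ S)).card

/-- `IsKFamily k n A` means `A` is a family of (distinct) `k`-element subsets of
`[n] = {1, …, n}` whose universe equals `[n]`. -/
def IsKFamily (k n : ℕ) (A : Finset (Finset ℕ)) : Prop :=
  (∀ S ∈ A, S.card = k ∧ S ⊆ Finset.Icc 1 n) ∧ famUniverse A = Finset.Icc 1 n

/-- The set of positive integers `m` such that every family of `m` distinct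
`k`-element subsets of `[n]` with universe `[n]` is FC.  `FC(k, n)` is the least
element of this set, when it exists. -/
def FCwitnesses (k n : ℕ) : Set ℕ :=
  {m : ℕ | 0 < m ∧ ∀ A : Finset (Finset ℕ), A.card = m → IsKFamily k n A → IsFC A}

/-- The family of all 7-subsets of `[10]` containing `10`. -/
def famA : Finset (Finset ℕ) :=
  (Finset.powersetCard 7 (Finset.Icc 1 10)).filter (fun S => 10 ∈ S)

/-- Fibers: `0` gives the closure of `famA`, `11` gives everything, and `1 ≤ i ≤ 10` gives
the sets `X` such that `i ∈ X` implies that `X` lies in the closure of `famA`. -/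
def fibP (i : ℕ) (X : Finset ℕ) : Prop :=
  i ≠ 11 → (i = 0 ∨ i ∈ X) → (10 ∈ X ∧ 7 ≤ X.card)

instance (i : ℕ) : DecidablePred (fibP i) := fun X => by unfold fibP; infer_instance

def fib (i : ℕ) : Finset (Finset ℕ) := (Finset.Icc 1 10).powerset.filter (fibP i)

/-- Class of an index in `range 81`: once `0`, once `11`, 16 times `10`, 7 times each `1..9`. -/
def cls (k : ℕ) : ℕ :=
  if k = 0 then 0 else if k = 1 then 11 else if k < 65 then (k - 2) % 9 + 1 else 10

def bigY : Finset ℕ := Finset.Icc 11 89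

def tailT (k : ℕ) : Finset ℕ :=
  if k = 0 then ∅ else if k = 1 then bigY else bigY.erase (k + 9)

def piece (k : ℕ) : Finset (Finset ℕ) := (fib (cls k)).image (fun X => X ∪ tailT k)

def bigF : Finset (Finset ℕ) := (Finset.range 81).biUnion piece

/-- Cardinalities of the fibers. -/
def tblC (i : ℕ) : ℕ :=
  if i = 0 then 130 else if i = 11 then 1024 else if i = 10 then 642 else 605

/-- Number of members of the fiber `i` containing `x`. -/
def tblX (i x : ℕ) : ℕ :=
  if i = 0 then (if x = 10 then 130 else 93)
  else if i = 11 then 512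
  else if i = 10 then (if x = 10 then 130 else 349)
  else if x = i then 93 else if x = 10 then 349 else 320

lemma card_fib : ∀ i ∈ Finset.range 12, (fib i).card = tblC i := by decide +kernel

lemma card_fib_mem : ∀ i ∈ Finset.range 12, ∀ x ∈ Finset.Icc 1 10,
    ((fib i).filter (fun S => x ∈ S)).card = tblX i x := by decide +kernel

lemma final_count : ∀ x ∈ Finset.Icc 1 10,
    2 * ∑ k ∈ Finset.range 81, tblX (cls k) x < ∑ k ∈ Finset.range 81, tblC (cls k) := by
  decide +kernel

lemma cls_mem : ∀ k ∈ Finset.range 81, cls k ∈ Finset.range 12 := by decide +kernel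

lemma tailT_sub (k : ℕ) : tailT k ⊆ bigY := by
  unfold tailT
  split_ifs
  · simp
  · simp
  · exact Finset.erase_subset _ _

lemma mem_fib {i : ℕ} {X : Finset ℕ} : X ∈ fib i ↔ X ⊆ Finset.Icc 1 10 ∧ fibP i X := by
  simp [fib]

lemma low_part {X T : Finset ℕ} (hX : X ⊆ Finset.Icc 1 10) (hT : T ⊆ bigY) :
    (X ∪ T) ∩ Finset.Icc 1 10 = X := by
  ext a
  have h1 := @hX a
  have h2 := @hT a
  simp only [bigY, Finset.mem_Icc, Finset.mem_inter, Finset.mem_union] at *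
  grind

lemma high_part {X T : Finset ℕ} (hX : X ⊆ Finset.Icc 1 10) (hT : T ⊆ bigY) :
    (X ∪ T) ∩ bigY = T := by
  ext a
  have h1 := @hX a
  have h2 := @hT a
  simp only [bigY, Finset.mem_Icc, Finset.mem_inter, Finset.mem_union] at *
  grind

lemma tailT_inj : ∀ k ∈ Finset.range 81, ∀ l ∈ Finset.range 81,
    tailT k = tailT l → k = l := by decide +kernel

lemma mem_piece {k : ℕ} {S : Finset ℕ} : S ∈ piece k ↔ ∃ X ∈ fib (cls k), X ∪ tailT k = S := by
  simp [piece]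

lemma mem_bigF {S : Finset ℕ} : S ∈ bigF ↔ ∃ k ∈ Finset.range 81, S ∈ piece k := by
  unfold bigF
  rw [Finset.mem_biUnion]

lemma pieces_disj : ((Finset.range 81 : Finset ℕ) : Set ℕ).PairwiseDisjoint piece := by
  intro k hk l hl hkl
  simp only [Function.onFun]
  rw [Finset.disjoint_left]
  intro S hS hS'
  obtain ⟨X, hX, rfl⟩ := mem_piece.1 hS
  obtain ⟨Z, hZ, hZX⟩ := mem_piece.1 hS'
  apply hkl
  apply tailT_inj k (by simpa using hk) l (by simpa using hl)
  rw [← high_part (mem_fib.1 hX).1 (tailT_sub k), ← hZX,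
    high_part (mem_fib.1 hZ).1 (tailT_sub l)]

lemma piece_inj (k : ℕ) : Set.InjOn (fun X => X ∪ tailT k) (fib (cls k) : Set (Finset ℕ)) := by
  intro X hX Z hZ h
  simp only at h
  rw [← low_part (mem_fib.1 hX).1 (tailT_sub k), h, low_part (mem_fib.1 hZ).1 (tailT_sub k)]

lemma card_bigF : bigF.card = ∑ k ∈ Finset.range 81, tblC (cls k) := by
  unfold bigF
  rw [Finset.card_biUnion pieces_disj]
  refine Finset.sum_congr rfl fun k hk => ?_
  rw [piece, Finset.card_image_of_injOn (piece_inj k), card_fib _ (cls_mem k hk)]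

lemma card_bigF_mem {x : ℕ} (hx : x ∈ Finset.Icc 1 10) :
    (bigF.filter (fun S => x ∈ S)).card = ∑ k ∈ Finset.range 81, tblX (cls k) x := by
  unfold bigF
  rw [Finset.filter_biUnion, Finset.card_biUnion]
  · refine Finset.sum_congr rfl fun k hk => ?_
    rw [← card_fib_mem _ (cls_mem k hk) x hx, piece, Finset.filter_image,
      Finset.card_image_of_injOn]
    · congr 1
      refine Finset.filter_congr fun X hX => ?_
      have : x ∉ tailT k := fun h => by
        have := tailT_sub k h
        simp only [bigY, Finset.mem_Icc] at this hx
        omega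
      simp [this]
    · exact (piece_inj k).mono (by intro X hX; simp at hX; exact hX.1)
  · intro k hk l hl hkl
    exact Finset.disjoint_filter_filter (pieces_disj hk hl hkl)

lemma fibP_of_closure {i : ℕ} {X : Finset ℕ} (h : 10 ∈ X ∧ 7 ≤ X.card) : fibP i X :=
  fun _ _ => h

lemma fibP_closure_union {i : ℕ} {X Z : Finset ℕ} (h : 10 ∈ X ∧ 7 ≤ X.card) :
    fibP i (X ∪ Z) :=
  fibP_of_closure ⟨Finset.mem_union_left _ h.1,
    h.2.trans (Finset.card_le_card Finset.subset_union_left)⟩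

lemma fibP_union {i : ℕ} {X Z : Finset ℕ} (hX : fibP i X) (hZ : fibP i Z) : fibP i (X ∪ Z) := by
  intro h11 h
  rcases h with h | h
  · exact fibP_closure_union (hX h11 (Or.inl h)) h11 (Or.inl h)
  · rcases Finset.mem_union.1 h with h' | h'
    · exact fibP_closure_union (hX h11 (Or.inr h')) h11 (Or.inr h)
    · have := fibP_closure_union (i := i) (Z := X) (hZ h11 (Or.inr h'))
      rw [Finset.union_comm] at this
      exact this h11 (Or.inr h)

lemma fibP_zero {X : Finset ℕ} (h : fibP 0 X) : 10 ∈ X ∧ 7 ≤ X.card :=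
  h (by norm_num) (Or.inl rfl)

/-- Two pieces combine into a piece. -/
lemma combine {k l : ℕ} (hk : k ∈ Finset.range 81) (hl : l ∈ Finset.range 81)
    {X Z : Finset ℕ} (hX : fibP (cls k) X) (hZ : fibP (cls l) Z) :
    ∃ m ∈ Finset.range 81, tailT k ∪ tailT l = tailT m ∧ fibP (cls m) (X ∪ Z) := by
  by_cases hkl : k = l
  · subst hkl
    exact ⟨k, hk, by simp, fibP_union hX hZ⟩
  by_cases k0 : k = 0
  · subst k0
    exact ⟨l, hl, by simp [tailT], fibP_closure_union (fibP_zero (by simpa [cls] using hX))⟩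
  by_cases l0 : l = 0
  · subst l0
    refine ⟨k, hk, by simp [tailT], ?_⟩
    rw [Finset.union_comm]
    exact fibP_closure_union (fibP_zero (by simpa [cls] using hZ))
  refine ⟨1, by simp, ?_, by simp [cls, fibP]⟩
  ext a
  simp only [tailT, k0, l0, if_false, one_ne_zero, if_true, Finset.mem_union]
  split_ifs <;> (try simp only [Finset.mem_erase]) <;> clear hX hZ hk hl <;> grind

lemma bigF_rare {x : ℕ} (hx : x ∈ Finset.Icc 1 10) :
    2 * (bigF.filter (fun S => x ∈ S)).card < bigF.card := by
  rw [card_bigF, card_bigF_mem hx]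
  exact final_count x hx

attribute [irreducible] bigF piece fib

lemma mk_bigF {k : ℕ} (hk : k ∈ Finset.range 81) {X : Finset ℕ} (hX : X ⊆ Finset.Icc 1 10)
    (hP : fibP (cls k) X) : X ∪ tailT k ∈ bigF :=
  mem_bigF.2 ⟨k, hk, mem_piece.2 ⟨X, mem_fib.2 ⟨hX, hP⟩, rfl⟩⟩

lemma bigF_closed : UnionClosed bigF := by
  constructor
  · have h : (∅ : Finset ℕ) ∪ tailT 1 ∈ bigF :=
      mk_bigF (by simp) (Finset.empty_subset _) (by simp [cls, fibP])
    exact Finset.nonempty_of_ne_empty (fun h0 => by rw [h0] at h; exact Finset.notMem_empty _ h)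
  · intro S hS R hR
    obtain ⟨k, hk, hS⟩ := mem_bigF.1 hS
    obtain ⟨l, hl, hR⟩ := mem_bigF.1 hR
    obtain ⟨X, hX, rfl⟩ := mem_piece.1 hS
    obtain ⟨Z, hZ, rfl⟩ := mem_piece.1 hR
    rw [mem_fib] at hX hZ
    obtain ⟨m, hm, hT, hP⟩ := combine hk hl hX.2 hZ.2
    rw [Finset.union_union_union_comm, hT]
    exact mk_bigF hm (Finset.union_subset hX.1 hZ.1) hP

lemma famA_sub : famA ⊆ bigF := by
  intro S hS
  simp only [famA, Finset.mem_filter, Finset.mem_powersetCard] at hS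
  have h : S ∪ tailT 0 ∈ bigF :=
    mk_bigF (by simp) hS.1.1 (fibP_of_closure ⟨hS.2, hS.1.2.ge⟩)
  have h0 : tailT 0 = ∅ := by simp [tailT]
  rwa [h0, Finset.union_empty] at h

lemma famA_universe : famUniverse famA = Finset.Icc 1 10 := by decide +kernel

lemma famA_card : famA.card = 84 := by decide +kernel

attribute [irreducible] famA

/-- FC(7, 10) ≥ 85: there is a Non-FC family of 84 distinct 7-element subsets of
{1, …, 10} with universe {1, …, 10}. -/
theorem FC_lower_bound_7_10 :
    ∃ A : Finset (Finset ℕ), A.card = 84 ∧ IsKFamily 7 10 A ∧ ¬ IsFC A := by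
  refine ⟨famA, famA_card, ⟨?_, famA_universe⟩, ?_⟩
  · intro S hS
    rw [famA, Finset.mem_filter, Finset.mem_powersetCard] at hS
    exact ⟨hS.1.2, hS.1.1⟩
  · intro h
    obtain ⟨x, hx, hle⟩ := h bigF bigF_closed famA_sub
    rw [famA_universe] at hx
    exact absurd (bigF_rare hx) (not_lt.2 hle)
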